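/- Let m be a positive integer, k a natural number with 0 ≤ k ≤ m, and d a complex number that is not a nonpositive integer or zero. Then ((−1)^k / k!) · Σ_{j=0}^k (−k)_j (d+m)_j / ((d)_j · j!) = binomial(m, k) / (d)_k. -/

import Mathlib

/-- The Pochhammer symbol `(a)_k = a (a+1) ⋯ (a+k-1)`. -/
noncomputable def poch (a : ℂ) (k : ℕ) : ℂ := Polynomial.eval a (ascPochhammer ℂ k)

theorem poch_neg_nat (k j : ℕ) : poch (-(k : ℂ)) j = (-1) ^ j * ((k.choose j : ℂ) * (j.factorial : ℂ)) := by
  unfold poch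
  rw [ascPochhammer_eval_neg_eq_descPochhammer, descPochhammer_eval_eq_descFactorial,
    Nat.descFactorial_eq_factorial_mul_choose]
  push_cast
  ring

theorem poch_succ_right (a : ℂ) (k : ℕ) : poch a (k + 1) = poch a k * (a + k) := by
  unfold poch
  rw [ascPochhammer_succ_eval]

theorem poch_succ_left (a : ℂ) (k : ℕ) : poch a (k + 1) = a * poch (a + 1) k := by
  unfold poch
  rw [ascPochhammer_succ_left]
  simp

theorem poch_ne_zero (d : ℂ) (hd : ∀ n : ℕ, d ≠ -(n : ℂ)) (k : ℕ) : poch d k ≠ 0 := by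
  induction k with
  | zero => simp [poch]
  | succ k ih =>
    rw [poch_succ_right]
    exact mul_ne_zero ih fun h => hd k (eq_neg_of_add_eq_zero_left h)

theorem chu_vandermonde (k : ℕ) : ∀ (b d : ℂ), (∀ n : ℕ, d ≠ -(n : ℂ)) →
    ∑ j ∈ Finset.range (k + 1), (k.choose j : ℂ) * ((-1) ^ j * (poch b j / poch d j))
      = poch (d - b) k / poch d k := by
  induction k with
  | zero => intro b d _; simp [poch]
  | succ k ih =>
    intro b d hd
    have hd' : ∀ n : ℕ, d + 1 ≠ -(n : ℂ) := by
      intro n h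
      apply hd (n + 1)
      push_cast
      linear_combination h
    have h0 : d ≠ 0 := by simpa using hd 0
    have hk : d + k ≠ 0 := fun h => hd k (eq_neg_of_add_eq_zero_left h)
    have e := Finset.sum_choose_succ_mul
      (fun i _ => (-1 : ℂ) ^ i * (poch b i / poch d i)) k
    rw [e, ih b d hd]
    have e2 : ∑ j ∈ Finset.range (k + 1), (k.choose j : ℂ) *
        ((-1) ^ (j + 1) * (poch b (j + 1) / poch d (j + 1)))
        = - (b / d) * (poch (d - b) k / poch (d + 1) k) := by
      have := ih (b + 1) (d + 1) hd'
      rw [show d + 1 - (b + 1) = d - b by ring] at this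
      rw [← this, Finset.mul_sum]
      refine Finset.sum_congr rfl fun j _ => ?_
      rw [poch_succ_left b, poch_succ_left d, mul_div_mul_comm]
      ring
    rw [e2]
    have h1 := poch_ne_zero d hd k
    have h2 := poch_ne_zero (d + 1) hd' k
    have h3 : poch d k * (d + k) = d * poch (d + 1) k := by
      rw [← poch_succ_right, poch_succ_left]
    have h4 : poch (d + 1) k = poch d k * (d + k) / d := by
      rw [h3]; field_simp
    rw [h4, poch_succ_right, poch_succ_right]
    field_simp
    ring

/-- The coefficient `C_{k,1}` in the single-parameter case:
`((-1)^k/k!) ₂F₁(-k, d+m; d; 1) = binom(m,k) / (d)_k`. -/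
theorem coefficient_C_single
    (m : ℕ) (hm : 0 < m) (k : ℕ) (hk : k ≤ m)
    (d : ℂ) (hd : ∀ n : ℕ, d ≠ -(n : ℂ)) :
    ((-1 : ℂ) ^ k / (Nat.factorial k : ℂ)) *
        ∑ j ∈ Finset.range (k + 1), poch (-(k : ℂ)) j * poch (d + (m : ℂ)) j /
          (poch d j * (Nat.factorial j : ℂ))
      = ((Nat.choose m k : ℕ) : ℂ) / poch d k := by
  have hsum : ∑ j ∈ Finset.range (k + 1), poch (-(k : ℂ)) j * poch (d + (m : ℂ)) j /
      (poch d j * (Nat.factorial j : ℂ)) = poch (d - (d + m)) k / poch d k := by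
    rw [← chu_vandermonde k (d + m) d hd]
    refine Finset.sum_congr rfl fun j _ => ?_
    have hj : (j.factorial : ℂ) ≠ 0 := by exact_mod_cast j.factorial_ne_zero
    have := poch_ne_zero d hd j
    rw [poch_neg_nat]
    field_simp
  have hkf : (k.factorial : ℂ) ≠ 0 := by exact_mod_cast k.factorial_ne_zero
  have hs : ((-1 : ℂ) ^ k) * (-1) ^ k = 1 := by
    rw [← mul_pow]; simp
  have hp := poch_ne_zero d hd k
  rw [hsum, show d - (d + (m : ℂ)) = -(m : ℂ) by ring, poch_neg_nat]
  field_simp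
  linear_combination (m.choose k : ℂ) * hs
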